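/- Let S be a nonempty finite set of positive integers such that for every nonempty subset T of S the product ∏_{z ∈ T} z is not a perfect square, and let ε : S → {-1, 1} be any function. Then the set of odd primes p such that χ_p(z) = ε(z) for every z ∈ S has natural density 2^{-|S|} in the primes. -/

import Mathlib

/-!
Modulo `q = 4 ∏ z`, quadratic reciprocity makes every `z ∈ S` into a quadratic character of
`(ℤ/q)ˣ`, with value `χ_p(z)` at a prime `p`. The product of these characters over a nonempty
`T ⊆ S` is nontrivial because `∏_{z ∈ T} z` is not a square, so expanding `∏ (1 + ε(z) χ(z))` and
using orthogonality shows that a proportion `2 ^ (-|S|)` of the residue classes carries the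
pattern `ε`. Each of these classes contains its fair share of primes by the prime number theorem
in arithmetic progressions.

The latter follows from the Wiener–Ikehara theorem, since Mathlib provides the continuous
extension to `Re s ≥ 1` of the relevant Dirichlet series minus its pole. For the Tauberian step,
let `f(u) = e^{-u} ∑_{n ≤ e^u} a(n)`. Its Laplace transform minus `1/z` extends continuously to
the imaginary axis, so averaging `f` around `y` against a nonnegative kernel whose Fourier
transform has compact support yields, by the Riemann–Lebesgue lemma, the mass of the kernel in
the limit `y → ∞`. As `e^u f(u)` is monotone, convergence of these averages for narrower and
narrower kernels forces `f(y) → 1`.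
-/

open Complex Filter MeasureTheory Set Topology
open scoped FourierTransform Real Convolution ComplexConjugate ContDiff

/-- The Laplace transform `∫₀^∞ e^{-zt} f(t) dt`. -/
noncomputable def laplaceTransform (f : ℝ → ℂ) (z : ℂ) : ℂ :=
  ∫ t in Ioi (0 : ℝ), cexp (-z * t) * f t

theorem fourier_comp_sub_left (f : ℝ → ℂ) (x y : ℝ) :
    𝓕 (fun t ↦ f (x - t)) y = 𝐞 (-(y * x)) • 𝓕⁻ f y := by
  rw [Real.fourier_real_eq, Real.fourierInv_eq, ← integral_sub_left_eq_self _ _ x,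
    Circle.smul_def, ← integral_smul]
  congr! 2
  rw [← Circle.smul_def, smul_smul, ← AddChar.map_add_eq_mul, sub_sub_cancel,
    RCLike.inner_apply, conj_trivial]
  ring_nf

theorem integral_mul_fourier_sub {f φ : ℝ → ℂ} (hf : Integrable f) (hφ : Integrable φ) (x : ℝ) :
    ∫ t, f t * 𝓕 φ (x - t) = 𝓕 (fun y ↦ φ y * 𝓕⁻ f y) x := by
  have hself : ∫ t, 𝓕 φ t • f (x - t) = ∫ y, φ y • 𝓕 (fun t ↦ f (x - t)) y := by
    have h := VectorFourier.integral_fourierIntegral_smul_eq_flip (L := innerₗ ℝ)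
      Real.continuous_fourierChar continuous_inner hφ (hf.comp_sub_left x)
    rwa [flip_innerₗ] at h
  calc ∫ t, f t * 𝓕 φ (x - t)
      = ∫ t, 𝓕 φ t • f (x - t) := by
        rw [← integral_sub_left_eq_self _ _ x]
        simp only [sub_sub_cancel, smul_eq_mul, mul_comm]
    _ = ∫ y, φ y • 𝓕 (fun t ↦ f (x - t)) y := hself
    _ = 𝓕 (fun y ↦ φ y * 𝓕⁻ f y) x := by
        simp only [fourier_comp_sub_left, Real.fourier_real_eq (fun y ↦ φ y * _),
          Circle.smul_def, smul_eq_mul, mul_left_comm]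

theorem laplaceTransform_comp_mul_left (f : ℝ → ℂ) {δ : ℝ} (hδ : 0 < δ) (z : ℂ) :
    laplaceTransform (fun t ↦ f (δ * t)) z = δ⁻¹ * laplaceTransform f (z / δ) := by
  have h := integral_comp_mul_left_Ioi (fun t : ℝ ↦ cexp (-(z / δ) * t) * f t) 0 hδ
  rw [mul_zero, real_smul] at h
  rw [laplaceTransform, laplaceTransform, ← h]
  have hδ' : (δ : ℂ) ≠ 0 := ofReal_ne_zero.2 hδ.ne'
  congr! 4 with t
  push_cast
  field_simp

section Smoothing

variable {f φ g : ℝ → ℂ} {H : ℂ → ℂ} {M : ℝ}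

theorem integrableOn_exp_neg_mul (hg : Measurable g) (hM : ∀ t, ‖g t‖ ≤ M)
    {z : ℂ} (hz : 0 < z.re) : IntegrableOn (fun t : ℝ ↦ cexp (-z * t) * g t) (Ioi 0) :=
  (integrableOn_exp_mul_complex_Ioi (a := -z) (by simpa) 0).mul_bdd
    hg.aestronglyMeasurable (.of_forall hM)

theorem laplaceTransform_sub_const (hf : Measurable f) (hM : ∀ t, ‖f t‖ ≤ M) (c : ℂ)
    {z : ℂ} (hz : 0 < z.re) :
    laplaceTransform (fun t ↦ f t - c) z = laplaceTransform f z - c / z := by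
  have hexp : IntegrableOn (fun t : ℝ ↦ cexp (-z * t)) (Ioi 0) :=
    integrableOn_exp_mul_complex_Ioi (by simpa using hz) 0
  have hconst : ∫ t in Ioi (0 : ℝ), cexp (-z * t) = 1 / z := by
    rw [integral_exp_mul_complex_Ioi (by simpa using hz)]
    simp
  simp_rw [laplaceTransform, mul_sub]
  rw [integral_sub (integrableOn_exp_neg_mul hf hM hz) (hexp.mul_const c), integral_mul_const,
    hconst, one_div, inv_mul_eq_div]

theorem fourierInv_indicator_exp_mul (g : ℝ → ℂ) (δ y : ℝ) :
    𝓕⁻ ((Ioi 0).indicator fun t : ℝ ↦ cexp (-δ * t) * g t) y =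
      laplaceTransform g (δ - 2 * π * y * I) := by
  rw [Real.fourierInv_eq', laplaceTransform, ← integral_indicator measurableSet_Ioi]
  congr! 2 with t
  by_cases ht : t ∈ Ioi 0
  · simp only [indicator_of_mem ht, ← mul_assoc, ← Complex.exp_add, smul_eq_mul,
      RCLike.inner_apply, conj_trivial]
    push_cast
    ring_nf
  · simp only [indicator_of_notMem ht, smul_zero]

theorem integral_exp_mul_fourier_sub {δ : ℝ} (hg : Measurable g)
    (hM : ∀ t, ‖g t‖ ≤ M) (hφ : Integrable φ) (hδ : 0 < δ) (x : ℝ) :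
    ∫ t in Ioi (0 : ℝ), cexp (-δ * t) * g t * 𝓕 φ (x - t) =
      𝓕 (fun y ↦ φ y * laplaceTransform g (δ - 2 * π * y * I)) x := by
  have hinteg : IntegrableOn (fun t : ℝ ↦ cexp (-δ * t) * g t) (Ioi 0) :=
    integrableOn_exp_neg_mul hg hM (by simpa using hδ)
  simp_rw [← fourierInv_indicator_exp_mul,
    ← integral_mul_fourier_sub (hinteg.integrable_indicator measurableSet_Ioi) hφ,
    ← integral_indicator measurableSet_Ioi, indicator_mul_left]

theorem tendsto_integral_exp_neg_mul {h : ℝ → ℂ} (hh : IntegrableOn h (Ioi 0)) :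
    Tendsto (fun δ : ℝ ↦ ∫ t in Ioi (0 : ℝ), cexp (-δ * t) * h t) (𝓝[>] 0)
      (𝓝 (∫ t in Ioi (0 : ℝ), h t)) := by
  refine tendsto_integral_filter_of_dominated_convergence (fun t ↦ ‖h t‖) ?_ ?_ hh.norm ?_
  · exact .of_forall fun δ ↦
      (by fun_prop : Continuous fun t : ℝ ↦ cexp (-δ * t)).aestronglyMeasurable.mul
        hh.aestronglyMeasurable
  · filter_upwards [self_mem_nhdsWithin] with δ hδ
    filter_upwards [ae_restrict_mem measurableSet_Ioi] with t ht
    rw [norm_mul, norm_exp]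
    refine mul_le_of_le_one_left (norm_nonneg _) (Real.exp_le_one_iff.2 ?_)
    simpa using (mul_pos (mem_Ioi.1 hδ) (mem_Ioi.1 ht)).le
  · refine .of_forall fun t ↦ tendsto_nhdsWithin_of_tendsto_nhds ?_
    have hcont : Continuous fun δ : ℝ ↦ cexp (-δ * t) * h t := by fun_prop
    simpa using hcont.tendsto 0

theorem continuousOn_fourier_mul_comp_vertical (hφ : Continuous φ) (hφc : HasCompactSupport φ)
    (hH : ContinuousOn H {z | 0 ≤ z.re}) (x : ℝ) :
    ContinuousOn (fun δ : ℝ ↦ 𝓕 (fun y : ℝ ↦ φ y * H (δ - 2 * π * y * I)) x) (Ici 0) := by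
  simp_rw [Real.fourier_real_eq, Circle.smul_def, Real.fourierChar_apply]
  refine continuousOn_integral_of_compact_support hφc ?_ fun δ y _ hy ↦ by
    rw [image_eq_zero_of_notMem_tsupport hy, zero_mul, smul_zero]
  have hHcont : ContinuousOn (fun p : ℝ × ℝ ↦ H (p.1 - 2 * π * p.2 * I)) (Ici 0 ×ˢ univ) :=
    hH.comp (by fun_prop) fun p hp ↦ by simpa using hp.1
  have hφcont : Continuous fun p : ℝ × ℝ ↦ φ p.2 := hφ.comp continuous_snd
  exact (by fun_prop : Continuous fun p : ℝ × ℝ ↦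
    cexp ((2 * π * -(p.2 * x) : ℝ) * I)).continuousOn.smul (hφcont.continuousOn.mul hHcont)

theorem integral_Ioi_mul_fourier_sub (hg : Measurable g)
    (hM : ∀ t, ‖g t‖ ≤ M) (hH : ContinuousOn H {z | 0 ≤ z.re})
    (hgH : ∀ z : ℂ, 0 < z.re → laplaceTransform g z = H z) (hφ : Continuous φ)
    (hφc : HasCompactSupport φ) (hφF : Integrable (𝓕 φ)) (x : ℝ) :
    ∫ t in Ioi (0 : ℝ), g t * 𝓕 φ (x - t) = 𝓕 (fun y : ℝ ↦ φ y * H (-(2 * π * y * I))) x := by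
  have hleft : Tendsto (fun δ : ℝ ↦ ∫ t in Ioi (0 : ℝ), cexp (-δ * t) * (g t * 𝓕 φ (x - t)))
      (𝓝[>] 0) (𝓝 (∫ t in Ioi (0 : ℝ), g t * 𝓕 φ (x - t))) :=
    tendsto_integral_exp_neg_mul <|
      ((hφF.comp_sub_left x).bdd_mul hg.aestronglyMeasurable (.of_forall hM)).integrableOn
  have hright := ((continuousOn_fourier_mul_comp_vertical hφ hφc hH x 0 self_mem_Ici).mono
    Ioi_subset_Ici_self).tendsto
  simp only [ofReal_zero, zero_sub] at hright
  refine tendsto_nhds_unique (hleft.congr' ?_) hright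
  filter_upwards [self_mem_nhdsWithin] with δ hδ
  simp_rw [← mul_assoc]
  rw [integral_exp_mul_fourier_sub hg hM (hφ.integrable_of_hasCompactSupport hφc) hδ x]
  congr! 3 with y
  exact hgH _ (by simpa using hδ)

theorem tendsto_integral_Ioi_mul_fourier_sub (hg : Measurable g)
    (hM : ∀ t, ‖g t‖ ≤ M) (hH : ContinuousOn H {z | 0 ≤ z.re})
    (hgH : ∀ z : ℂ, 0 < z.re → laplaceTransform g z = H z) (hφ : Continuous φ)
    (hφc : HasCompactSupport φ) (hφF : Integrable (𝓕 φ)) :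
    Tendsto (fun x ↦ ∫ t in Ioi (0 : ℝ), g t * 𝓕 φ (x - t)) atTop (𝓝 0) := by
  simp_rw [integral_Ioi_mul_fourier_sub hg hM hH hgH hφ hφc hφF]
  exact (Real.zero_at_infty_fourier _).mono_left atTop_le_cocompact

theorem tendsto_integral_Ioi_comp_sub {K : ℝ → ℂ} (hK : Integrable K) :
    Tendsto (fun x : ℝ ↦ ∫ t in Ioi 0, K (x - t)) atTop (𝓝 (∫ u, K u)) := by
  have hcover : AECover volume atTop fun x : ℝ ↦ Iio x := aecover_Iio tendsto_id
  refine (hcover.integral_tendsto_of_countably_generated hK).congr fun x ↦ ?_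
  rw [← integral_indicator measurableSet_Iio, ← integral_indicator measurableSet_Ioi,
    ← integral_sub_left_eq_self _ _ x]
  congr! 2
  simp [indicator]

theorem tendsto_integral_mul_fourier {c : ℂ} (hf : Measurable f)
    (hM : ∀ t, ‖f t‖ ≤ M) (hf0 : ∀ t < 0, f t = 0) (hH : ContinuousOn H {z | 0 ≤ z.re})
    (hfH : ∀ z : ℂ, 0 < z.re → laplaceTransform (fun t ↦ f t - c) z = H z) (hφ : Continuous φ)
    (hφc : HasCompactSupport φ) (hφF : Integrable (𝓕 φ)) :
    Tendsto (fun x : ℝ ↦ ∫ u, f (x - u) * 𝓕 φ u) atTop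
      (𝓝 (c * ∫ u, 𝓕 φ u)) := by
  have hdiff : Tendsto (fun x ↦ ∫ t in Ioi (0 : ℝ), (f t - c) * 𝓕 φ (x - t)) atTop (𝓝 0) :=
    tendsto_integral_Ioi_mul_fourier_sub (hf.sub_const c)
      (fun t ↦ (norm_sub_le _ _).trans (add_le_add_left (hM t) _)) hH hfH hφ hφc hφF
  have hsum := hdiff.add ((tendsto_integral_Ioi_comp_sub hφF).const_mul c)
  rw [zero_add] at hsum
  refine hsum.congr fun x ↦ ?_
  have hFx : Integrable fun t ↦ 𝓕 φ (x - t) := hφF.comp_sub_left x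
  have hfFx : Integrable fun t ↦ f t * 𝓕 φ (x - t) :=
    hFx.bdd_mul hf.aestronglyMeasurable (.of_forall hM)
  calc (∫ t in Ioi 0, (f t - c) * 𝓕 φ (x - t)) + c * ∫ t in Ioi 0, 𝓕 φ (x - t)
      = ∫ t in Ioi 0, f t * 𝓕 φ (x - t) := by
        simp_rw [sub_mul]
        rw [integral_sub hfFx.integrableOn (hFx.const_mul c).integrableOn, integral_const_mul,
          sub_add_cancel]
    _ = ∫ t, f t * 𝓕 φ (x - t) := by
        rw [← integral_Ici_eq_integral_Ioi]
        refine setIntegral_eq_integral_of_forall_compl_eq_zero fun t ht ↦ ?_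
        rw [hf0 t (by simpa using ht), zero_mul]
    _ = ∫ u, f (x - u) * 𝓕 φ u := by
        rw [← integral_sub_left_eq_self _ _ x]
        simp only [sub_sub_cancel]

theorem tendsto_integral_comp_sub_mul_fourier {c : ℂ} (hf : Measurable f)
    (hM : ∀ t, ‖f t‖ ≤ M) (hf0 : ∀ t < 0, f t = 0) (hH : ContinuousOn H {z | 0 ≤ z.re})
    (hfH : ∀ z : ℂ, 0 < z.re → laplaceTransform (fun t ↦ f t - c) z = H z) (hφ : Continuous φ)
    (hφc : HasCompactSupport φ) (hφF : Integrable (𝓕 φ)) {δ : ℝ} (hδ : 0 < δ) :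
    Tendsto (fun x : ℝ ↦ ∫ u, f (x - δ * u) * 𝓕 φ u) atTop (𝓝 (c * ∫ u, 𝓕 φ u)) := by
  have hHδ : ContinuousOn (fun z ↦ δ⁻¹ * H (z / δ)) {z | 0 ≤ z.re} :=
    continuousOn_const.mul <| hH.comp (by fun_prop) fun z hz ↦ by
      simpa [div_ofReal_re] using div_nonneg hz hδ.le
  have hlim := tendsto_integral_mul_fourier (f := fun t ↦ f (δ * t)) (c := c)
    (hf.comp (measurable_const_mul δ)) (fun t ↦ hM _)
    (fun t ht ↦ hf0 _ (mul_neg_of_pos_of_neg hδ ht)) hHδ (fun z hz ↦ ?_) hφ hφc hφF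
  · refine (hlim.comp (tendsto_id.atTop_div_const hδ)).congr fun x ↦ ?_
    simp only [Function.comp_apply, id_eq, mul_sub, mul_div_cancel₀ x hδ.ne']
  · rw [laplaceTransform_comp_mul_left (fun t ↦ f t - c) hδ, hfH _ ?_]
    rw [div_ofReal_re]
    exact div_pos hz hδ

end Smoothing

theorem conj_fourier_ofReal (f : ℝ → ℝ) (x : ℝ) :
    conj (𝓕 (fun t ↦ (f t : ℂ)) x) = 𝓕 (fun t ↦ (f (-t) : ℂ)) x := by
  rw [Real.fourier_real_eq, Real.fourier_real_eq, ← integral_conj, ← integral_neg_eq_self]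
  congr! 2
  simp only [Circle.smul_def, smul_eq_mul, map_mul, conj_ofReal, ← Circle.coe_inv_eq_conj,
    ← AddChar.map_neg_eq_inv, neg_mul, neg_neg]

theorem fourier_convolution_self {f : ℝ → ℝ} (hf : Integrable f)
    (heven : ∀ t, f (-t) = f t) (x : ℝ) :
    𝓕 ((fun t ↦ (f t : ℂ)) ⋆[.mul ℂ ℂ] fun t ↦ (f t : ℂ)) x =
      (‖𝓕 (fun t ↦ (f t : ℂ)) x‖ ^ 2 : ℝ) := by
  have hreal := conj_fourier_ofReal f x
  simp only [heven] at hreal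
  have hfi : Integrable fun t ↦ (f t : ℂ) := hf.ofReal
  rw [Real.fourier_mul_convolution_eq hfi hfi, ← normSq_eq_norm_sq, ← mul_conj, hreal]

/-- The kernel is the Fourier transform of the self-convolution of an even bump function. -/
theorem exists_hasCompactSupport_fourier_nonneg : ∃ (φ : ℝ → ℂ) (k : ℝ → ℝ), Continuous φ ∧
    HasCompactSupport φ ∧ (∀ u, 𝓕 φ u = k u) ∧ (∀ u, 0 ≤ k u) ∧ Integrable k ∧ 0 < ∫ u, k u := by
  let ψ : ContDiffBump (0 : ℝ) := default
  let f : ℝ → ℂ := fun t ↦ (ψ t : ℂ)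
  have hfsupp : HasCompactSupport f := ψ.hasCompactSupport.comp_left ofReal_zero
  have hfsmooth : ContDiff ℝ ∞ f := ofRealCLM.contDiff.comp ψ.contDiff
  have hfi : Integrable f := ψ.integrable.ofReal
  let S := 𝓕 (hfsupp.toSchwartzMap hfsmooth)
  have hS : ⇑S = 𝓕 f := SchwartzMap.fourier_coe _
  have hSint : Integrable fun u ↦ ‖S u‖ ^ 2 := (S.memLp 2).integrable_norm_pow two_ne_zero
  have hS0 : S 0 ≠ 0 := by
    have h0 : S 0 = (∫ t, ψ t : ℝ) := by
      rw [hS, Real.fourier_real_eq, ← integral_complex_ofReal]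
      simp [f]
    rw [h0, ofReal_ne_zero]
    exact ψ.integral_pos.ne'
  refine ⟨f ⋆[.mul ℂ ℂ] f, fun u ↦ ‖S u‖ ^ 2, ?_, hfsupp.convolution _ hfsupp, fun u ↦ ?_,
    fun u ↦ by positivity, hSint, ?_⟩
  · exact hfsupp.continuous_convolution_right _ hfi.locallyIntegrable hfsmooth.continuous
  · rw [fourier_convolution_self ψ.integrable fun t ↦ ψ.neg t, hS]
  · exact integral_pos_of_integrable_nonneg_nonzero (by fun_prop) hSint
      (fun u ↦ by positivity) (by positivity)

section Averaging

variable {f k : ℝ → ℝ} {M c η : ℝ}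

theorem sq_mul_mem_Icc (hη : 0 < η) {u : ℝ} (hu : u ∈ Icc (-η⁻¹) η⁻¹) :
    η ^ 2 * u ∈ Icc (-η) η := by
  have hcancel : η ^ 2 * η⁻¹ = η := by field_simp
  have hsq : 0 ≤ η ^ 2 := sq_nonneg η
  constructor
  · calc -η = η ^ 2 * -η⁻¹ := by rw [mul_neg, hcancel]
      _ ≤ η ^ 2 * u := mul_le_mul_of_nonneg_left hu.1 hsq
  · exact (mul_le_mul_of_nonneg_left hu.2 hsq).trans_eq hcancel

theorem mul_exp_neg_le_of_monotone (hmono : Monotone fun t ↦ Real.exp t * f t) (t : ℝ) {u : ℝ}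
    (hu : 0 ≤ u) : f t * Real.exp (-u) ≤ f (t + u) := by
  rw [Real.exp_neg, mul_inv_le_iff₀ (Real.exp_pos u), ← mul_le_mul_iff_right₀ (Real.exp_pos t)]
  calc Real.exp t * f t ≤ Real.exp (t + u) * f (t + u) := hmono (le_add_of_nonneg_right hu)
    _ = Real.exp t * (f (t + u) * Real.exp u) := by rw [Real.exp_add]; ring

theorem integrable_comp_sub_mul_mul (hf : Measurable f) (hf0 : ∀ t, 0 ≤ f t) (hM : ∀ t, f t ≤ M)
    (hki : Integrable k) (x δ : ℝ) : Integrable fun u ↦ f (x - δ * u) * k u :=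
  hki.bdd_mul (by fun_prop : Measurable fun u ↦ f (x - δ * u)).aestronglyMeasurable
    (.of_forall fun u ↦ (Real.norm_of_nonneg (hf0 _)).trans_le (hM _))

/-- At scale `η ^ 2` the window `|u| ≤ η⁻¹` moves the argument by at most `η`, so after a shift by
`η` the monotonicity of `exp t * f t` applies in the same direction on the whole window. -/
theorem mul_exp_mul_setIntegral_le_integral (hf : Measurable f) (hf0 : ∀ t, 0 ≤ f t)
    (hM : ∀ t, f t ≤ M) (hmono : Monotone fun t ↦ Real.exp t * f t)
    (hk : ∀ u, 0 ≤ k u) (hki : Integrable k) (hη : 0 < η) (x : ℝ) :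
    f x * Real.exp (-(2 * η)) * ∫ u in Icc (-η⁻¹) η⁻¹, k u ≤
      ∫ u, f (x + η - η ^ 2 * u) * k u := by
  have hinteg := integrable_comp_sub_mul_mul hf hf0 hM hki (x + η) (η ^ 2)
  calc f x * Real.exp (-(2 * η)) * ∫ u in Icc (-η⁻¹) η⁻¹, k u
      = ∫ u in Icc (-η⁻¹) η⁻¹, f x * Real.exp (-(2 * η)) * k u := (integral_const_mul _ _).symm
    _ ≤ ∫ u in Icc (-η⁻¹) η⁻¹, f (x + η - η ^ 2 * u) * k u := by
        refine setIntegral_mono_on (hki.const_mul _).integrableOn hinteg.integrableOn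
          measurableSet_Icc fun u hu ↦ mul_le_mul_of_nonneg_right ?_ (hk u)
        obtain ⟨hlower, hupper⟩ := sq_mul_mem_Icc hη hu
        calc f x * Real.exp (-(2 * η)) ≤ f x * Real.exp (-(η - η ^ 2 * u)) :=
              mul_le_mul_of_nonneg_left (Real.exp_le_exp.2 (by linarith)) (hf0 x)
          _ ≤ f (x + η - η ^ 2 * u) := by
              rw [add_sub_assoc]
              exact mul_exp_neg_le_of_monotone hmono _ (by linarith)
    _ ≤ ∫ u, f (x + η - η ^ 2 * u) * k u :=
        setIntegral_le_integral hinteg (.of_forall fun u ↦ mul_nonneg (hf0 _) (hk u))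

theorem integral_le_mul_exp_mul_integral_add (hf : Measurable f) (hf0 : ∀ t, 0 ≤ f t)
    (hM : ∀ t, f t ≤ M) (hmono : Monotone fun t ↦ Real.exp t * f t)
    (hk : ∀ u, 0 ≤ k u) (hki : Integrable k) (hη : 0 < η) (x : ℝ) :
    ∫ u, f (x - η - η ^ 2 * u) * k u ≤
      f x * Real.exp (2 * η) * (∫ u, k u) + M * ∫ u in (Icc (-η⁻¹) η⁻¹)ᶜ, k u := by
  have hinteg := integrable_comp_sub_mul_mul hf hf0 hM hki (x - η) (η ^ 2)
  have hwindow : ∀ u ∈ Icc (-η⁻¹) η⁻¹, f (x - η - η ^ 2 * u) ≤ f x * Real.exp (2 * η) := by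
    intro u hu
    obtain ⟨hlower, hupper⟩ := sq_mul_mem_Icc hη hu
    have h := mul_exp_neg_le_of_monotone hmono (x - η - η ^ 2 * u)
      (by linarith : 0 ≤ η + η ^ 2 * u)
    rw [show x - η - η ^ 2 * u + (η + η ^ 2 * u) = x by ring, Real.exp_neg,
      mul_inv_le_iff₀ (Real.exp_pos _)] at h
    exact h.trans (mul_le_mul_of_nonneg_left (Real.exp_le_exp.2 (by linarith)) (hf0 x))
  rw [← integral_add_compl (measurableSet_Icc (a := -η⁻¹) (b := η⁻¹)) hinteg]
  gcongr ?_ + ?_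
  · calc ∫ u in Icc (-η⁻¹) η⁻¹, f (x - η - η ^ 2 * u) * k u
        ≤ ∫ u in Icc (-η⁻¹) η⁻¹, f x * Real.exp (2 * η) * k u :=
          setIntegral_mono_on hinteg.integrableOn (hki.const_mul _).integrableOn measurableSet_Icc
            fun u hu ↦ mul_le_mul_of_nonneg_right (hwindow u hu) (hk u)
      _ ≤ ∫ u, f x * Real.exp (2 * η) * k u :=
          setIntegral_le_integral (hki.const_mul _)
            (.of_forall fun u ↦ mul_nonneg (mul_nonneg (hf0 x) (Real.exp_pos _).le) (hk u))
      _ = f x * Real.exp (2 * η) * ∫ u, k u := integral_const_mul _ _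
  · rw [← integral_const_mul]
    exact setIntegral_mono hinteg.integrableOn (hki.const_mul _).integrableOn
      fun u ↦ mul_le_mul_of_nonneg_right (hM _) (hk u)

theorem tendsto_setIntegral_Icc_inv (hki : Integrable k) :
    Tendsto (fun η ↦ ∫ u in Icc (-η⁻¹) η⁻¹, k u) (𝓝[>] 0) (𝓝 (∫ u, k u)) :=
  (aecover_Icc (tendsto_neg_atTop_atBot.comp tendsto_inv_nhdsGT_zero)
    tendsto_inv_nhdsGT_zero).integral_tendsto_of_countably_generated hki

theorem tendsto_of_tendsto_integral_comp_sub_mul (hf : Measurable f) (hf0 : ∀ t, 0 ≤ f t)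
    (hM : ∀ t, f t ≤ M) (hmono : Monotone fun t ↦ Real.exp t * f t)
    (hk : ∀ u, 0 ≤ k u) (hki : Integrable k) (hkpos : 0 < ∫ u, k u)
    (hlim : ∀ δ > 0, Tendsto (fun x ↦ ∫ u, f (x - δ * u) * k u) atTop (𝓝 (c * ∫ u, k u))) :
    Tendsto f atTop (𝓝 c) := by
  have hexp (a : ℝ) : Tendsto (fun η : ℝ ↦ Real.exp (a * η)) (𝓝[>] 0) (𝓝 1) := by
    have hcont : Continuous fun η : ℝ ↦ Real.exp (a * η) := by fun_prop
    simpa using (hcont.tendsto 0).mono_left nhdsWithin_le_nhds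
  have hI := tendsto_setIntegral_Icc_inv hki
  have hIc : Tendsto (fun η ↦ ∫ u in (Icc (-η⁻¹) η⁻¹)ᶜ, k u) (𝓝[>] 0) (𝓝 0) := by
    simpa [setIntegral_compl measurableSet_Icc hki] using hI.const_sub (∫ u, k u)
  refine tendsto_order.2 ⟨fun a ha ↦ ?_, fun b hb ↦ ?_⟩
  · have hbound : Tendsto (fun η ↦ a * Real.exp (2 * η) * (∫ u, k u) +
        M * ∫ u in (Icc (-η⁻¹) η⁻¹)ᶜ, k u) (𝓝[>] 0) (𝓝 (a * ∫ u, k u)) := by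
      simpa using (((hexp 2).const_mul a).mul_const (∫ u, k u)).add (hIc.const_mul M)
    obtain ⟨η, hη, hη0⟩ := ((hbound.eventually_lt_const (mul_lt_mul_of_pos_right ha hkpos)).and
      self_mem_nhdsWithin).exists
    have hlimη := (hlim _ (pow_pos hη0 2)).comp
      (tendsto_atTop_add_const_right atTop (-η) tendsto_id)
    filter_upwards [hlimη.eventually_const_lt hη] with x hx
    have hle := hx.trans_le
      (integral_le_mul_exp_mul_integral_add hf hf0 hM hmono hk hki hη0 x)
    have hpos : 0 < Real.exp (2 * η) * ∫ u, k u := by positivity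
    exact lt_of_mul_lt_mul_right (by linarith) hpos.le
  · have hbound : Tendsto (fun η ↦ b * Real.exp (-(2 * η)) *
        ∫ u in Icc (-η⁻¹) η⁻¹, k u) (𝓝[>] 0) (𝓝 (b * ∫ u, k u)) := by
      simpa using ((hexp (-2)).const_mul b).mul hI
    obtain ⟨η, hη, hη0⟩ := ((hbound.eventually_const_lt (mul_lt_mul_of_pos_right hb hkpos)).and
      self_mem_nhdsWithin).exists
    have hlimη := (hlim _ (pow_pos hη0 2)).comp (tendsto_atTop_add_const_right atTop η tendsto_id)
    filter_upwards [hlimη.eventually_lt_const hη] with x hx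
    have hle := (mul_exp_mul_setIntegral_le_integral hf hf0 hM hmono hk hki hη0 x).trans_lt hx
    have hpos : 0 ≤ Real.exp (-(2 * η)) * ∫ u in Icc (-η⁻¹) η⁻¹, k u :=
      mul_nonneg (Real.exp_pos _).le (integral_nonneg hk)
    exact lt_of_mul_lt_mul_right (by linarith) hpos

end Averaging

theorem tendsto_of_laplaceTransform_sub_const_eq {f : ℝ → ℝ} {M c : ℝ} {H : ℂ → ℂ}
    (hf : Measurable f) (hf0 : ∀ t, 0 ≤ f t) (hM : ∀ t, f t ≤ M) (hneg : ∀ t < 0, f t = 0)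
    (hmono : Monotone fun t ↦ Real.exp t * f t) (hH : ContinuousOn H {z | 0 ≤ z.re})
    (hfH : ∀ z : ℂ, 0 < z.re → laplaceTransform (fun t ↦ (f t : ℂ) - c) z = H z) :
    Tendsto f atTop (𝓝 c) := by
  obtain ⟨φ, k, hφ, hφc, hφk, hk, hki, hkpos⟩ := exists_hasCompactSupport_fourier_nonneg
  refine tendsto_of_tendsto_integral_comp_sub_mul hf hf0 hM hmono hk hki hkpos fun δ hδ ↦ ?_
  have hφF : Integrable (𝓕 φ) := by
    rw [funext hφk]
    exact hki.ofReal
  have hlim := tendsto_integral_comp_sub_mul_fourier (f := fun t ↦ (f t : ℂ)) hf.complex_ofReal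
    (fun t ↦ (Complex.norm_of_nonneg (hf0 t)).trans_le (hM t))
    (fun t ht ↦ by rw [hneg t ht, ofReal_zero]) hH hfH hφ hφc hφF hδ
  simp_rw [hφk, ← ofReal_mul, integral_complex_ofReal, ← ofReal_mul] at hlim
  exact tendsto_ofReal_iff.1 hlim

section Dirichlet

variable {a : ℕ → ℝ} {C c : ℝ}

/-- The summatory function of `a` on the exponential scale, normalised by its expected size:
`e^{-t} ∑_{1 ≤ k ≤ e^t} a k`. -/
noncomputable def expMean (a : ℕ → ℝ) (t : ℝ) : ℝ :=
  Real.exp (-t) * ∑ k ∈ Finset.Icc 1 ⌊Real.exp t⌋₊, a k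

theorem monotone_exp_mul_expMean (ha : ∀ k, 0 ≤ a k) :
    Monotone fun t ↦ Real.exp t * expMean a t := by
  simp only [expMean, ← mul_assoc, ← Real.exp_add, add_neg_cancel, Real.exp_zero, one_mul]
  exact fun x y hxy ↦ Finset.sum_le_sum_of_subset_of_nonneg
    (Finset.Icc_subset_Icc_right (Nat.floor_mono (Real.exp_le_exp.2 hxy))) fun k _ _ ↦ ha k

theorem measurable_expMean (ha : ∀ k, 0 ≤ a k) : Measurable (expMean a) := by
  have hcancel : expMean a = fun t ↦ Real.exp (-t) * (Real.exp t * expMean a t) := by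
    ext t
    rw [Real.exp_neg, inv_mul_cancel_left₀ (Real.exp_ne_zero t)]
  rw [hcancel]
  exact (Real.measurable_exp.comp measurable_neg).mul (monotone_exp_mul_expMean ha).measurable

theorem expMean_nonneg (ha : ∀ k, 0 ≤ a k) (t : ℝ) : 0 ≤ expMean a t :=
  mul_nonneg (Real.exp_pos _).le (Finset.sum_nonneg fun k _ ↦ ha k)

theorem expMean_le (hC : ∀ n : ℕ, ∑ k ∈ Finset.Icc 1 n, a k ≤ C * n) (hC0 : 0 ≤ C) (t : ℝ) :
    expMean a t ≤ C := by
  rw [expMean, Real.exp_neg, inv_mul_le_iff₀ (Real.exp_pos t), mul_comm]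
  exact (hC _).trans (mul_le_mul_of_nonneg_left (Nat.floor_le (Real.exp_pos t).le) hC0)

theorem expMean_of_neg {t : ℝ} (ht : t < 0) : expMean a t = 0 := by
  simp [expMean, Nat.floor_eq_zero.2 (Real.exp_lt_one_iff.2 ht)]

theorem add_one_ne_zero_of_re_nonneg {z : ℂ} (hz : 0 ≤ z.re) : z + 1 ≠ 0 := by
  intro h
  have hre : z.re + 1 = 0 := by simpa using congrArg re h
  linarith

theorem laplaceTransform_expMean (ha : ∀ k, 0 ≤ a k)
    (hC : ∀ n : ℕ, ∑ k ∈ Finset.Icc 1 n, a k ≤ C * n) {z : ℂ} (hz : 0 < z.re) :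
    laplaceTransform (fun t ↦ (expMean a t : ℂ)) z = LSeries (fun n ↦ a n) (z + 1) / (z + 1) := by
  have hz1 := add_one_ne_zero_of_re_nonneg hz.le
  have hO : (fun n : ℕ ↦ ∑ k ∈ Finset.Icc 1 n, a k) =O[atTop] fun n ↦ (n : ℝ) ^ (1 : ℝ) := by
    refine .of_bound C (.of_forall fun n ↦ ?_)
    simpa [abs_of_nonneg (Finset.sum_nonneg fun k _ ↦ ha k)] using hC n
  rw [LSeries_eq_mul_integral_of_nonneg a zero_le_one (by simpa) hO ha, mul_div_cancel_left₀ _ hz1,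
    ← Real.exp_zero, ← integral_comp_exp_Ioi, laplaceTransform]
  congr! 2 with t
  have hexp : cexp (-z * t) * cexp (-t) = cexp t * cexp (t * -(z + 1 + 1)) := by
    rw [← Complex.exp_add, ← Complex.exp_add]
    ring_nf
  rw [real_smul, cpow_def_of_ne_zero (ofReal_ne_zero.2 (Real.exp_pos t).ne'),
    ← ofReal_log (Real.exp_pos t).le, Real.log_exp, expMean]
  push_cast
  linear_combination (∑ k ∈ Finset.Icc 1 ⌊Real.exp t⌋₊, (a k : ℂ)) * hexp

/-- **Wiener–Ikehara theorem**, with an a priori Chebyshev-type bound on the partial sums. -/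
theorem tendsto_sum_div_of_LSeries_sub_pole {G : ℂ → ℂ} (ha : ∀ k, 0 ≤ a k)
    (hC : ∀ n : ℕ, ∑ k ∈ Finset.Icc 1 n, a k ≤ C * n) (hG : ContinuousOn G {s | 1 ≤ s.re})
    (hLG : ∀ s : ℂ, 1 < s.re → G s = LSeries (fun n ↦ a n) s - c / (s - 1)) :
    Tendsto (fun n : ℕ ↦ (∑ k ∈ Finset.Icc 1 n, a k) / n) atTop (𝓝 c) := by
  have hC0 : 0 ≤ C := by simpa using (ha 1).trans (by simpa using hC 1)
  have hlim : Tendsto (expMean a) atTop (𝓝 c) := by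
    refine tendsto_of_laplaceTransform_sub_const_eq (H := fun z ↦ (G (z + 1) - c) / (z + 1))
      (measurable_expMean ha) (expMean_nonneg ha) (expMean_le hC hC0) (fun t ↦ expMean_of_neg)
      (monotone_exp_mul_expMean ha) ?_ fun z hz ↦ ?_
    · exact ((hG.comp (by fun_prop) fun z hz ↦ by simpa using hz).sub continuousOn_const).div
        (by fun_prop) fun z hz ↦ add_one_ne_zero_of_re_nonneg hz
    · have hz0 : z ≠ 0 := fun h ↦ by simp [h] at hz
      have hz1 := add_one_ne_zero_of_re_nonneg hz.le
      rw [laplaceTransform_sub_const (measurable_expMean ha).complex_ofReal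
        (fun t ↦ (Complex.norm_of_nonneg (expMean_nonneg ha t)).trans_le (expMean_le hC hC0 t)) _
        hz, laplaceTransform_expMean ha hC hz, hLG _ (by simpa), add_sub_cancel_right]
      field_simp
      ring
  refine (hlim.comp (Real.tendsto_log_atTop.comp tendsto_natCast_atTop_atTop)).congr' ?_
  filter_upwards [eventually_gt_atTop 0] with n hn
  have hn' : (0 : ℝ) < n := Nat.cast_pos.2 hn
  simp only [Function.comp_apply, expMean, Real.exp_neg, Real.exp_log hn', Nat.floor_natCast,
    inv_mul_eq_div]

end Dirichlet

section PrimeDensity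

open ArithmeticFunction (vonMangoldt)
open ArithmeticFunction.vonMangoldt Asymptotics

theorem tendsto_sum_residueClass_div {q : ℕ} [NeZero q] {a : ZMod q} (ha : IsUnit a) :
    Tendsto (fun n : ℕ ↦ (∑ k ∈ Finset.Icc 1 n, residueClass a k) / n) atTop
      (𝓝 (q.totient : ℝ)⁻¹) := by
  refine tendsto_sum_div_of_LSeries_sub_pole (C := Real.log 4 + 4) (residueClass_nonneg a)
    (fun n ↦ ?_) (continuousOn_LFunctionResidueClassAux a) fun s hs ↦ ?_
  · refine le_trans ?_ (Chebyshev.psi_le_const_mul_self n.cast_nonneg)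
    rw [Chebyshev.psi, Nat.floor_natCast]
    exact Finset.sum_le_sum fun k _ ↦ residueClass_le a k
  · rw [eqOn_LFunctionResidueClassAux ha hs, ofReal_inv, ofReal_natCast]

theorem ncard_setOf_mem_and_le {A : Set ℕ} (h0 : 0 ∉ A) (n : ℕ) :
    ({k | k ∈ A ∧ k ≤ n}.ncard : ℝ) = ∑ k ∈ Finset.Icc 1 n, A.indicator 1 k := by
  classical
  have hset : {k | k ∈ A ∧ k ≤ n} = ↑{k ∈ Finset.Icc 1 n | k ∈ A} := by
    ext k
    simp only [mem_ofPred_eq, Finset.coe_filter, Finset.mem_Icc]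
    exact ⟨fun h ↦ ⟨⟨Nat.pos_of_ne_zero fun hk ↦ h0 (hk ▸ h.1), h.2⟩, h.1⟩, fun h ↦ ⟨h.2, h.1.2⟩⟩
  rw [hset, ncard_coe_finset, Finset.card_filter]
  push_cast
  simp only [indicator_apply, Pi.one_apply]

theorem abs_indicator_vonMangoldt_sub_le (A : Set ℕ) {k n : ℕ} (hk : k ∈ Finset.Icc 1 n) :
    |A.indicator (vonMangoldt ·) k - Real.log n * {p | p.Prime ∧ p ∈ A}.indicator 1 k| ≤
      (if k.Prime then Real.log n - Real.log k else 0) +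
        (vonMangoldt k - if k.Prime then Real.log k else 0) := by
  obtain ⟨hk1, hkn⟩ := Finset.mem_Icc.1 hk
  have hlog : Real.log k ≤ Real.log n :=
    Real.log_le_log (Nat.cast_pos.2 hk1) (Nat.cast_le.2 hkn)
  have hΛ : 0 ≤ vonMangoldt k := ArithmeticFunction.vonMangoldt_nonneg
  have habs : |Real.log k - Real.log n| = Real.log n - Real.log k := by
    rw [abs_sub_comm, abs_of_nonneg (sub_nonneg.2 hlog)]
  by_cases hp : k.Prime <;> by_cases hA : k ∈ A <;>
    simp [hp, hA, ArithmeticFunction.vonMangoldt_apply_prime, habs, abs_of_nonneg, hΛ, hlog]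

theorem abs_sum_indicator_vonMangoldt_sub_le (A : Set ℕ) (n : ℕ) :
    |(∑ k ∈ Finset.Icc 1 n, A.indicator (vonMangoldt ·) k) -
        Real.log n * {p | (p.Prime ∧ p ∈ A) ∧ p ≤ n}.ncard| ≤
      (Nat.primeCounting n * Real.log n - Chebyshev.theta n) +
        (Chebyshev.psi n - Chebyshev.theta n) := by
  have hA : 0 ∉ {p : ℕ | p.Prime ∧ p ∈ A} := fun h ↦ Nat.not_prime_zero h.1
  have hπ : (Nat.primeCounting n : ℝ) * Real.log n =
      ∑ k ∈ Finset.Icc 1 n, if k.Prime then Real.log n else 0 := by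
    rw [← Nat.primesLE_card_eq_primeCounting, Nat.primesLE_eq_filter_Icc_one, ← nsmul_eq_mul,
      ← Finset.sum_const, Finset.sum_filter]
  have hθ : Chebyshev.theta n = ∑ k ∈ Finset.Icc 1 n, if k.Prime then Real.log k else 0 := by
    rw [Chebyshev.theta, Nat.floor_natCast, Finset.sum_filter]
    rfl
  have hψ : Chebyshev.psi n = ∑ k ∈ Finset.Icc 1 n, vonMangoldt k := by
    rw [Chebyshev.psi, Nat.floor_natCast]
    rfl
  have hcard := ncard_setOf_mem_and_le hA n
  simp only [mem_ofPred_eq] at hcard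
  rw [hcard, hπ, hθ, hψ, Finset.mul_sum, ← Finset.sum_sub_distrib, ← Finset.sum_sub_distrib,
    ← Finset.sum_sub_distrib, ← Finset.sum_add_distrib]
  refine (Finset.abs_sum_le_sum_abs _ _).trans (Finset.sum_le_sum fun k hk ↦
    (abs_indicator_vonMangoldt_sub_le A hk).trans_eq ?_)
  split_ifs <;> ring

theorem tendsto_primeCounting_mul_log_sub_theta_div :
    Tendsto (fun x : ℝ ↦ (Nat.primeCounting ⌊x⌋₊ * Real.log x - Chebyshev.theta x) / x) atTop
      (𝓝 0) := by
  have h := Chebyshev.primeCounting_sub_theta_div_log_isBigO.mul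
    (isBigO_refl (fun x : ℝ ↦ Real.log x / x) atTop)
  refine (h.congr' ?_ ?_).trans_tendsto Real.tendsto_log_atTop.inv_tendsto_atTop
  all_goals
    filter_upwards [eventually_gt_atTop 1] with x hx
    have hlog : Real.log x ≠ 0 := (Real.log_pos hx).ne'
    have hx0 : x ≠ 0 := by positivity
  · field_simp
  · simp only [Pi.inv_apply]
    field_simp

theorem tendsto_psi_sub_theta_div :
    Tendsto (fun x : ℝ ↦ (Chebyshev.psi x - Chebyshev.theta x) / x) atTop (𝓝 0) := by
  have h := Chebyshev.isBigO_psi_sub_theta_sqrt.mul (isBigO_refl (fun x : ℝ ↦ x⁻¹) atTop)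
  refine (h.congr' ?_ ?_).trans_tendsto Real.tendsto_sqrt_atTop.inv_tendsto_atTop
  · exact .of_forall fun x ↦ rfl
  · filter_upwards with x
    rw [← div_eq_mul_inv, Real.sqrt_div_self]
    simp

theorem tendsto_ncard_prime_mul_log_div {A : Set ℕ} {c : ℝ}
    (h : Tendsto (fun n : ℕ ↦ (∑ k ∈ Finset.Icc 1 n, A.indicator (vonMangoldt ·) k) / n) atTop
      (𝓝 c)) :
    Tendsto (fun n : ℕ ↦ Real.log n * {p | (p.Prime ∧ p ∈ A) ∧ p ≤ n}.ncard / n) atTop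
      (𝓝 c) := by
  have herr := (tendsto_primeCounting_mul_log_sub_theta_div.add tendsto_psi_sub_theta_div).comp
    tendsto_natCast_atTop_atTop
  rw [add_zero] at herr
  have hdiff := squeeze_zero_norm (f := fun n : ℕ ↦
    (∑ k ∈ Finset.Icc 1 n, A.indicator (vonMangoldt ·) k) / n -
      Real.log n * {p | (p.Prime ∧ p ∈ A) ∧ p ≤ n}.ncard / n) (fun n ↦ ?_) herr
  · simpa using h.sub hdiff
  · rw [Function.comp_apply, Nat.floor_natCast, ← sub_div, ← add_div, norm_div,
      Real.norm_of_nonneg n.cast_nonneg]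
    exact div_le_div_of_nonneg_right (abs_sum_indicator_vonMangoldt_sub_le A n) n.cast_nonneg

/-- The set `A` has natural density `δ` in the primes. This is meant for sets of primes, which the
definition does not enforce. -/
def HasPrimeDensity (A : Set ℕ) (δ : ℝ) : Prop :=
  Tendsto (fun x : ℕ ↦ ({p | p ∈ A ∧ p ≤ x}.ncard : ℝ) / {p : ℕ | p.Prime ∧ p ≤ x}.ncard) atTop
    (𝓝 δ)

theorem hasPrimeDensity_setOf_prime_and_cast_eq {q : ℕ} [NeZero q] {a : ZMod q} (ha : IsUnit a) :
    HasPrimeDensity {p | p.Prime ∧ (p : ZMod q) = a} (q.totient : ℝ)⁻¹ := by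
  have hnum := tendsto_ncard_prime_mul_log_div (tendsto_sum_residueClass_div ha)
  have hden := tendsto_ncard_prime_mul_log_div
    (tendsto_sum_residueClass_div (isUnit_of_subsingleton (0 : ZMod 1)))
  simp only [mem_ofPred_eq, eq_iff_true_of_subsingleton, and_true, Nat.totient_one, Nat.cast_one,
    inv_one] at hnum hden
  have hquot := hnum.div hden one_ne_zero
  rw [div_one] at hquot
  refine hquot.congr' ?_
  filter_upwards [eventually_gt_atTop 1] with n hn
  have hlog : Real.log n ≠ 0 := (Real.log_pos (Nat.one_lt_cast.2 hn)).ne'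
  have hn0 : (n : ℝ) ≠ 0 := Nat.cast_ne_zero.2 (zero_lt_one.trans hn).ne'
  rw [Pi.div_apply, div_div_div_cancel_right₀ hn0, mul_div_mul_left _ _ hlog]

namespace HasPrimeDensity

protected theorem empty : HasPrimeDensity ∅ 0 := by
  simp [HasPrimeDensity]

protected theorem union {A B : Set ℕ} {α β : ℝ} (hA : HasPrimeDensity A α)
    (hB : HasPrimeDensity B β) (hAB : Disjoint A B) : HasPrimeDensity (A ∪ B) (α + β) := by
  refine (hA.add hB).congr fun n ↦ ?_
  have hunion : {p | p ∈ A ∪ B ∧ p ≤ n} = {p | p ∈ A ∧ p ≤ n} ∪ {p | p ∈ B ∧ p ≤ n} := by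
    ext p
    simp only [mem_union, mem_ofPred_eq, or_and_right]
  have hfin (C : Set ℕ) : {p | p ∈ C ∧ p ≤ n}.Finite := (finite_Iic n).subset fun p hp ↦ hp.2
  rw [hunion, ncard_union_eq (hAB.mono (sep_subset _ _) (sep_subset _ _)) (hfin A) (hfin B),
    Nat.cast_add, add_div]

protected theorem biUnion {ι : Type*} {s : Finset ι} {A : ι → Set ℕ} {δ : ι → ℝ}
    (hdisj : (s : Set ι).PairwiseDisjoint A) (h : ∀ i ∈ s, HasPrimeDensity (A i) (δ i)) :
    HasPrimeDensity (⋃ i ∈ s, A i) (∑ i ∈ s, δ i) := by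
  classical
  induction s using Finset.induction_on with
  | empty => simpa using HasPrimeDensity.empty
  | insert i s hi ih =>
    rw [Finset.set_biUnion_insert, Finset.sum_insert hi]
    rw [Finset.coe_insert, pairwiseDisjoint_insert_of_notMem hi] at hdisj
    rw [Finset.forall_mem_insert] at h
    exact h.1.union (ih hdisj.1 h.2) (disjoint_iUnion₂_right.2 hdisj.2)

end HasPrimeDensity

theorem hasPrimeDensity_setOf_prime_and_cast_mem {q : ℕ} [NeZero q] (U : Finset (ZMod q)ˣ) :
    HasPrimeDensity {p | p.Prime ∧ ∃ u ∈ U, (p : ZMod q) = u} (U.card / q.totient) := by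
  have h := HasPrimeDensity.biUnion (s := U) (A := fun u ↦ {p | p.Prime ∧ (p : ZMod q) = u})
    (fun u _ v _ huv ↦ Set.disjoint_left.2 fun p hu hv ↦ huv (Units.ext (hu.2.symm.trans hv.2)))
    fun u _ ↦ hasPrimeDensity_setOf_prime_and_cast_eq u.isUnit
  rw [Finset.sum_const, nsmul_eq_mul, ← div_eq_mul_inv] at h
  convert! h using 1
  ext p
  simp

end PrimeDensity

section JacobiSymbol

open scoped NumberTheorySymbols

theorem exists_modEq_modEq_one_coprime {r t q : ℕ} (hr : r.Prime) (ht : t.Coprime r) {k : ℕ}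
    (hk : k ≠ 0) (hq : q ≠ 0) :
    ∃ b, b ≡ t [MOD r ^ k] ∧ b ≡ 1 [MOD ordCompl[r] q] ∧ b.Coprime q := by
  obtain ⟨b, hbt, hb1⟩ := Nat.chineseRemainder ((Nat.coprime_ordCompl hr hq).pow_left k) t 1
  refine ⟨b, hbt, hb1, ?_⟩
  rw [← Nat.ordProj_mul_ordCompl_eq_self q r]
  refine .mul_right (.pow_right _ ?_) ?_
  · rw [Nat.Coprime, (hbt.of_dvd (dvd_pow_self r hk)).gcd_eq]
    exact ht
  · rw [Nat.Coprime, hb1.gcd_eq, Nat.gcd_one_left]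

theorem jacobiSym_eq_one_of_modEq_one {a : ℤ} {b : ℕ} (hb : b ≡ 1 [MOD 4 * a.natAbs]) :
    J(a | b) = 1 := by
  have hodd : Odd b := Nat.odd_iff.2 (hb.of_dvd (by omega))
  rw [jacobiSym.mod_right a hodd, hb, ← jacobiSym.mod_right a odd_one, jacobiSym.one_right]

theorem exists_coprime_jacobiSym_prime_mul_eq_neg_one {r : ℕ} (hr : r.Prime) (hr2 : r ≠ 2)
    {c : ℤ} (hc : ¬(r : ℤ) ∣ c) {q : ℕ} (hq : q ≠ 0) :
    ∃ b : ℕ, b.Coprime q ∧ J(r * c | b) = -1 := by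
  have := Fact.mk hr
  have hc0 : c ≠ 0 := by
    rintro rfl
    exact hc (dvd_zero _)
  obtain ⟨g, hg⟩ := FiniteField.exists_nonsquare (F := ZMod r) (by rwa [ZMod.ringChar_zmod_n])
  have hgr : g.val.Coprime r := by
    rw [← ZMod.isUnit_iff_coprime, ZMod.natCast_zmod_val, isUnit_iff_ne_zero]
    rintro rfl
    exact hg .zero
  -- A nonresidue `b` modulo `r` which is `1` modulo `4 * c`: the factor `c` then contributes `1`.
  obtain ⟨b, hbg, hb1, hbq⟩ := exists_modEq_modEq_one_coprime (q := 4 * c.natAbs * q) hr hgr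
    one_ne_zero (by positivity)
  have hdvd : 4 * c.natAbs ∣ ordCompl[r] (4 * c.natAbs * q) := by
    have hr4 : r.Coprime (2 ^ 2) := (hr.odd_of_ne_two hr2).coprime_two_right.pow_right 2
    have hrc : r.Coprime c.natAbs := hr.coprime_iff_not_dvd.2 (mt Int.natCast_dvd.2 hc)
    refine ((hr4.mul_right hrc).symm.pow_right _).dvd_of_dvd_mul_left
      (m := ordProj[r] (4 * c.natAbs * q)) ?_
    rw [Nat.ordProj_mul_ordCompl_eq_self]
    exact dvd_mul_right _ _
  have hb4c : b ≡ 1 [MOD 4 * c.natAbs] := hb1.of_dvd hdvd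
  have hb4 : b ≡ 1 [MOD 4] := hb4c.of_mul_right _
  have hbr : J((b : ℤ) | r) = -1 := by
    rw [ZMod.nonsquare_iff_jacobiSym_eq_neg_one, Int.cast_natCast,
      (ZMod.natCast_eq_natCast_iff b g.val r).2 (by simpa using hbg), ZMod.natCast_zmod_val]
    exact hg
  refine ⟨b, hbq.coprime_mul_left_right, ?_⟩
  rw [jacobiSym.mul_left, jacobiSym_eq_one_of_modEq_one hb4c, mul_one,
    jacobiSym.quadratic_reciprocity_one_mod_four' (hr.odd_of_ne_two hr2) hb4, hbr]

theorem exists_coprime_jacobiSym_eq_neg_one_of_dvd_eight {c : ℤ} (hc : 4 * c.natAbs ∣ 8)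
    {t : ℕ} (ht : Odd t) (hJ : J(c | t) = -1) {q : ℕ} (hq : q ≠ 0) :
    ∃ b : ℕ, b.Coprime q ∧ J(c | b) = -1 := by
  obtain ⟨b, hbt, -, hbq⟩ := exists_modEq_modEq_one_coprime Nat.prime_two ht.coprime_two_right
    three_ne_zero hq
  have hbt2 : b ≡ t [MOD 2] := hbt.of_dvd (by norm_num)
  have hb : Odd b := Nat.odd_iff.2 (Eq.trans hbt2 (Nat.odd_iff.1 ht))
  refine ⟨b, hbq, ?_⟩
  rw [jacobiSym.mod_right c hb, hbt.of_dvd hc, ← jacobiSym.mod_right c ht, hJ]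

theorem dvd_two_or_exists_odd_prime_dvd {s : ℕ} (hs : Squarefree s) :
    s ∣ 2 ∨ ∃ r, r.Prime ∧ r ≠ 2 ∧ r ∣ s := by
  by_contra! h
  have hpow := Nat.eq_prime_pow_of_unique_prime_dvd hs.ne_zero
    fun {r} hr hrs ↦ by_contra fun hr2 ↦ h.2 r hr hr2 hrs
  have hlen : s.primeFactorsList.length ≠ 0 := fun h0 ↦
    h.1 (by rw [hpow, h0, pow_zero]; exact one_dvd 2)
  exact h.1 ((hs.dvd_pow_iff_dvd hlen).1 hpow.dvd)

theorem exists_coprime_jacobiSym_eq_neg_one_of_squarefree {c : ℤ} (hc : Squarefree c.natAbs)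
    (hc1 : c ≠ 1) {q : ℕ} (hq : q ≠ 0) : ∃ b : ℕ, b.Coprime q ∧ J(c | b) = -1 := by
  obtain h2 | ⟨r, hr, hr2, hrc⟩ := dvd_two_or_exists_odd_prime_dvd hc
  · have hcases : c = -1 ∨ c = 2 ∨ c = -2 := by
      have := (Nat.dvd_prime Nat.prime_two).1 h2
      omega
    have h8 : 4 * c.natAbs ∣ 8 := Nat.mul_dvd_mul_left 4 h2
    rcases hcases with rfl | rfl | rfl
    · exact exists_coprime_jacobiSym_eq_neg_one_of_dvd_eight h8 (t := 3) (by decide)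
        (by norm_num) hq
    · exact exists_coprime_jacobiSym_eq_neg_one_of_dvd_eight h8 (t := 5) (by decide)
        (by norm_num) hq
    · exact exists_coprime_jacobiSym_eq_neg_one_of_dvd_eight h8 (t := 5) (by decide)
        (by norm_num) hq
  · obtain ⟨d, rfl⟩ := Int.natCast_dvd.2 hrc
    refine exists_coprime_jacobiSym_prime_mul_eq_neg_one hr hr2 (fun hrd ↦ ?_) hq
    have hrr : r * r ∣ (r * d : ℤ).natAbs := by
      rw [Int.natAbs_mul, Int.natAbs_natCast]
      exact Nat.mul_dvd_mul_left r (Int.natCast_dvd.1 hrd)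
    exact hr.ne_one (Nat.isUnit_iff.1 (hc r hrr))

theorem exists_coprime_jacobiSym_eq_neg_one {a : ℤ} (ha : ¬IsSquare a) {q : ℕ} (hq : q ≠ 0) :
    ∃ b : ℕ, b.Coprime q ∧ J(a | b) = -1 := by
  obtain ⟨s, m, hms, hs⟩ := Nat.sq_mul_squarefree a.natAbs
  have ha0 : a ≠ 0 := by
    rintro rfl
    exact ha .zero
  have hm : m ≠ 0 := by
    rintro rfl
    exact ha0 (Int.natAbs_eq_zero.1 (by simpa using hms.symm))
  have hac : a = m ^ 2 * (a.sign * s) := by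
    rw [mul_left_comm, ← Nat.cast_pow, ← Nat.cast_mul, hms, Int.sign_mul_natAbs]
  have hcs : (a.sign * s).natAbs = s := by
    rw [Int.natAbs_mul, Int.natAbs_sign_of_ne_zero ha0, one_mul, Int.natAbs_natCast]
  have hc1 : a.sign * s ≠ 1 := fun h ↦ ha ⟨m, by rwa [h, mul_one, sq] at hac⟩
  obtain ⟨b, hbqm, hJ⟩ := exists_coprime_jacobiSym_eq_neg_one_of_squarefree
    (hcs.symm ▸ hs) hc1 (mul_ne_zero hq hm)
  refine ⟨b, hbqm.coprime_mul_right_right, ?_⟩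
  have hmb : Int.gcd m b = 1 := hbqm.coprime_mul_left_right.symm
  rw [hac, jacobiSym.mul_left, jacobiSym.sq_one' hmb, one_mul, hJ]

theorem jacobiSym_finset_prod_left {ι : Type*} (s : Finset ι) (z : ι → ℤ) (b : ℕ) :
    J(∏ i ∈ s, z i | b) = ∏ i ∈ s, J(z i | b) := by
  classical
  induction s using Finset.induction_on with
  | empty => simp
  | insert i s hi ih => rw [Finset.prod_insert hi, Finset.prod_insert hi, jacobiSym.mul_left, ih]

theorem exists_monoidHom_eq_jacobiSym {a : ℤ} {q : ℕ} [NeZero q] (h : 4 * a.natAbs ∣ q) :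
    ∃ χ : (ZMod q)ˣ →* ℤˣ, ∀ (b : ℕ) (hb : b.Coprime q),
      (χ (ZMod.unitOfCoprime b hb) : ℤ) = J(a | b) := by
  have hodd {b : ℕ} (hb : b.Coprime q) : Odd b :=
    Nat.coprime_two_right.1 (hb.coprime_dvd_right (.trans (by omega) h))
  have hmod {b : ℕ} (hb : Odd b) : J(a | (b : ZMod q).val) = J(a | b) := by
    have hb' : Odd (b % q) := hb.mod_even (even_iff_two_dvd.2 (.trans (by omega) h))
    rw [ZMod.val_natCast, jacobiSym.mod_right a hb', jacobiSym.mod_right a hb,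
      Nat.mod_mod_of_dvd _ h]
  have hval (u : (ZMod q)ˣ) : Odd (u : ZMod q).val := hodd (ZMod.val_coe_unit_coprime u)
  let χ : (ZMod q)ˣ →* ℤ :=
    { toFun := fun u ↦ J(a | (u : ZMod q).val)
      map_one' := by simpa using hmod odd_one
      map_mul' := fun u v ↦ by
        rw [← jacobiSym.mul_right' _ (hval u).pos.ne' (hval v).pos.ne',
          ← hmod ((hval u).mul (hval v))]
        simp }
  refine ⟨χ.toHomUnits, fun b hb ↦ ?_⟩
  rw [MonoidHom.coe_toHomUnits]
  exact hmod (hodd hb)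

end JacobiSymbol

theorem card_filter_forall_eq_mul_two_pow {G ι : Type*} [Group G] [Fintype G] {s : Finset ι}
    {χ : ι → G →* ℤˣ} (hχ : ∀ T ⊆ s, T.Nonempty → ∏ i ∈ T, χ i ≠ 1) (ε : ι → ℤˣ) :
    Finset.card {g : G | ∀ i ∈ s, χ i g = ε i} * 2 ^ s.card = Fintype.card G := by
  classical
  have hfactor (δ : ℤˣ) (η : ℤˣ) : (1 : ℤ) + (δ * η : ℤˣ) = if η = δ then 2 else 0 := by
    decide +revert
  have hindicator (g : G) : ∏ i ∈ s, ((1 : ℤ) + (ε i * χ i g : ℤˣ)) =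
      if ∀ i ∈ s, χ i g = ε i then 2 ^ s.card else 0 := by
    simp_rw [hfactor, Finset.prod_ite_zero, Finset.prod_const]
  have hexpand (g : G) : ∏ i ∈ s, ((1 : ℤ) + (ε i * χ i g : ℤˣ)) =
      ∑ T ∈ s.powerset, (∏ i ∈ T, ε i : ℤˣ) * ((∏ i ∈ T, χ i) g : ℤ) := by
    simp_rw [Finset.prod_one_add, Units.val_mul, Finset.prod_mul_distrib,
      MonoidHom.finsetProd_apply, Units.coe_prod]
  have hsum (T) (hT : T ∈ s.powerset) (hT0 : T ≠ ∅) : ∑ g, ((∏ i ∈ T, χ i) g : ℤ) = 0 := by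
    refine sum_hom_units_eq_zero ((Units.coeHom ℤ).comp (∏ i ∈ T, χ i)) fun h ↦
      hχ T (Finset.mem_powerset.1 hT) (Finset.nonempty_iff_ne_empty.2 hT0) ?_
    ext g
    simpa using DFunLike.congr_fun h g
  zify
  calc ((Finset.card {g : G | ∀ i ∈ s, χ i g = ε i} * 2 ^ s.card : ℤ))
      = ∑ g : G, ∏ i ∈ s, ((1 : ℤ) + (ε i * χ i g : ℤˣ)) := by
        simp_rw [hindicator, Finset.sum_ite, Finset.sum_const]
        simp
    _ = ∑ T ∈ s.powerset, (∏ i ∈ T, ε i : ℤˣ) * ∑ g, ((∏ i ∈ T, χ i) g : ℤ) := by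
        simp_rw [hexpand, Finset.mul_sum]
        exact Finset.sum_comm
    _ = Fintype.card G := by
        rw [Finset.sum_eq_single_of_mem ∅ (Finset.empty_mem_powerset s)]
        · simp
        · intro T hT hT0
          rw [hsum T hT hT0, mul_zero]

section LegendrePattern

open scoped NumberTheorySymbols

variable {ι : Type*} {s : Finset ι} {z : ι → ℤ}

theorem coprime_of_legendreSym_ne_zero {p : ℕ} [hp : Fact p.Prime] (hp2 : p ≠ 2) {a : ℤ}
    (ha : legendreSym p a ≠ 0) : p.Coprime (4 * a.natAbs) := by
  refine .mul_right ((hp.out.odd_of_ne_two hp2).coprime_two_right.pow_right 2) ?_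
  rw [hp.out.coprime_iff_not_dvd, ← Int.natCast_dvd]
  rwa [Ne, legendreSym.eq_zero_iff, ZMod.intCast_zmod_eq_zero_iff_dvd] at ha

theorem setOf_legendreSym_eq_eq_setOf_cast_mem {q : ℕ} [NeZero q]
    (hq : q = 4 * (∏ i ∈ s, z i).natAbs) {χ : ι → (ZMod q)ˣ →* ℤˣ}
    (hχ : ∀ i ∈ s, ∀ (b : ℕ) (hb : b.Coprime q),
      (χ i (ZMod.unitOfCoprime b hb) : ℤ) = J(z i | b)) (ε : ι → ℤˣ) :
    {p : ℕ | ∃ _ : Fact p.Prime, p ≠ 2 ∧ ∀ i ∈ s, legendreSym p (z i) = ε i} =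
      {p : ℕ | p.Prime ∧ ∃ u ∈ ({u | ∀ i ∈ s, χ i u = ε i} : Finset (ZMod q)ˣ),
        (p : ZMod q) = u} := by
  ext p
  simp only [Finset.mem_filter, Finset.mem_univ, true_and, mem_ofPred_eq]
  constructor
  · rintro ⟨hp, hp2, h⟩
    have hcop : p.Coprime q := by
      rw [hq]
      refine coprime_of_legendreSym_ne_zero hp2 ?_
      rw [jacobiSym.legendreSym.to_jacobiSym, jacobiSym_finset_prod_left, Finset.prod_ne_zero_iff]
      intro i hi
      rw [← jacobiSym.legendreSym.to_jacobiSym, h i hi]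
      exact (ε i).ne_zero
    refine ⟨hp.out, ZMod.unitOfCoprime p hcop, fun i hi ↦ Units.ext ?_, rfl⟩
    rw [hχ i hi, ← jacobiSym.legendreSym.to_jacobiSym, h i hi]
  · rintro ⟨hp, u, hu, hpu⟩
    have hcop : p.Coprime q := (ZMod.isUnit_iff_coprime p q).1 (hpu ▸ u.isUnit)
    have hu' : ZMod.unitOfCoprime p hcop = u := Units.ext hpu
    have hp2 : p ≠ 2 := by
      rintro rfl
      have h2 : 2 ∣ q := hq ▸ Dvd.dvd.mul_right (by norm_num) _
      exact absurd (hcop.eq_one_of_dvd h2) (by norm_num)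
    refine ⟨⟨hp⟩, hp2, fun i hi ↦ ?_⟩
    rw [@jacobiSym.legendreSym.to_jacobiSym p ⟨hp⟩, ← hχ i hi p hcop, hu', hu i hi]

theorem finset_prod_ne_one_of_not_isSquare {q : ℕ} [NeZero q] {χ : ι → (ZMod q)ˣ →* ℤˣ}
    (hχ : ∀ i ∈ s, ∀ (b : ℕ) (hb : b.Coprime q),
      (χ i (ZMod.unitOfCoprime b hb) : ℤ) = J(z i | b)) (hsq : ¬IsSquare (∏ i ∈ s, z i)) :
    ∏ i ∈ s, χ i ≠ 1 := by
  intro h1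
  obtain ⟨b, hb, hJ⟩ := exists_coprime_jacobiSym_eq_neg_one hsq (NeZero.ne q)
  have hprod : ((∏ i ∈ s, χ i) (ZMod.unitOfCoprime b hb) : ℤ) = J(∏ i ∈ s, z i | b) := by
    rw [MonoidHom.finsetProd_apply, Units.coe_prod, jacobiSym_finset_prod_left]
    exact Finset.prod_congr rfl fun i hi ↦ hχ i hi b hb
  rw [h1, hJ] at hprod
  norm_num at hprod

theorem density_setOf_legendreSym_pattern_general
    (hsq : ∀ T ⊆ s, T.Nonempty → ¬IsSquare (∏ i ∈ T, z i)) {ε : ι → ℤ}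
    (hε : ∀ i ∈ s, ε i = 1 ∨ ε i = -1) :
    HasPrimeDensity {p | ∃ _ : Fact p.Prime, p ≠ 2 ∧ ∀ i ∈ s, legendreSym p (z i) = ε i}
      (2 ^ (-(s.card : ℤ))) := by
  have hz (i) (hi : i ∈ s) : z i ≠ 0 := fun h ↦
    hsq {i} (by simpa using hi) (Finset.singleton_nonempty i) (by simp [h])
  obtain ⟨q, hq⟩ : ∃ q, q = 4 * (∏ i ∈ s, z i).natAbs := ⟨_, rfl⟩
  have : NeZero q := ⟨by simpa [hq, Finset.prod_eq_zero_iff] using hz⟩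
  have hdvd (i) (hi : i ∈ s) : 4 * (z i).natAbs ∣ q :=
    hq ▸ Nat.mul_dvd_mul_left 4 (Int.natAbs_dvd_natAbs.2 (Finset.dvd_prod_of_mem z hi))
  choose! χ hχ using fun i hi ↦ exists_monoidHom_eq_jacobiSym (hdvd i hi)
  have hindep (T) (hT : T ⊆ s) (hT0 : T.Nonempty) : ∏ i ∈ T, χ i ≠ 1 :=
    finset_prod_ne_one_of_not_isSquare (fun i hi ↦ hχ i (hT hi)) (hsq T hT hT0)
  choose! η hη using fun i hi ↦ Int.isUnit_iff.2 (hε i hi)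
  have hcard := card_filter_forall_eq_mul_two_pow hindep η
  rw [ZMod.card_units_eq_totient] at hcard
  have hdensity := hasPrimeDensity_setOf_prime_and_cast_mem {u | ∀ i ∈ s, χ i u = η i}
  rw [← setOf_legendreSym_eq_eq_setOf_cast_mem hq hχ η, ← hcard] at hdensity
  convert hdensity using 1
  · simp +contextual only [hη]
  · have htotient : q.totient ≠ 0 := by simp [NeZero.ne q]
    rw [← hcard] at htotient
    rw [zpow_neg, zpow_natCast, Nat.cast_mul, Nat.cast_pow, Nat.cast_ofNat,
      div_mul_cancel_left₀ (mod_cast left_ne_zero_of_mul htotient)]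

end LegendrePattern

/-- Theorem 5.15 (Filaseta–Richman): if `S` is a nonempty finite set of positive integers such
that the product of the elements of every nonempty subset of `S` is not a square, and `ε` is any
choice of signs on `S`, then the set of (odd) primes `p` with `χ_p ≡ ε` on `S` has natural
density `2 ^ (-|S|)` in the primes. -/
theorem density_setOf_legendreSym_pattern (S : Finset ℕ) (hS : S.Nonempty)
    (hpos : ∀ z ∈ S, 0 < z)
    (hsq : ∀ T ⊆ S, T.Nonempty → ¬ IsSquare (∏ z ∈ T, z))
    (ε : ℕ → ℤ) (hε : ∀ z ∈ S, ε z = 1 ∨ ε z = -1) :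
    Filter.Tendsto (fun x : ℕ =>
        (({p : ℕ | (∃ hp : Fact p.Prime, p ≠ 2 ∧ ∀ z ∈ S, @legendreSym p hp (z : ℤ) = ε z) ∧
            p ≤ x}.ncard : ℝ)) / ({p : ℕ | p.Prime ∧ p ≤ x}.ncard : ℝ))
      Filter.atTop (nhds ((2 : ℝ) ^ (-(S.card : ℤ)))) := by
  refine density_setOf_legendreSym_pattern_general (z := fun n : ℕ ↦ n)
    (fun T hT hT0 h ↦ hsq T hT hT0 ?_) hε
  rwa [← Nat.cast_prod, Int.isSquare_natCast_iff] at h
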